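/- There is a constant c = c(d, α) ∈ (0, ∞) such that for every x ∈ ℝ^d \ {0}, c^{−1} p_1(x) ≤ min(1, ν(x)) ≤ c p_1(x). -/

import Mathlib

open MeasureTheory Real Filter
open scoped RealInnerProductSpace Topology

noncomputable def cpow (κ : Measure NNReal) : ℕ → Measure NNReal
  | 0 => Measure.dirac 0
  | n + 1 => (cpow κ n).conv κ

lemma exists_cpoisson (κ : Measure NNReal) [IsFiniteMeasure κ] :
    ∃ μ : Measure NNReal, IsFiniteMeasure μ ∧ ∀ l : ℝ, 0 ≤ l →
      ∫ s, exp (-(l * (s : ℝ))) ∂μ = exp (-∫ s, (1 - exp (-(l * (s : ℝ)))) ∂κ) := by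
  have hmeas : ∀ l : ℝ, Measurable fun s : NNReal => ENNReal.ofReal (exp (-(l * (s : ℝ)))) := by
    intro l; fun_prop
  have hint : ∀ l : ℝ, 0 ≤ l → Integrable (fun s : NNReal => exp (-(l * (s : ℝ)))) κ := by
    intro l hl
    refine Integrable.mono' (integrable_const (1 : ℝ)) (by fun_prop) (Eventually.of_forall ?_)
    intro s
    rw [norm_of_nonneg (exp_pos _).le]
    exact exp_le_one_iff.2 (by have := mul_nonneg hl s.2; simp at this ⊢; linarith)
  have hpow : ∀ l : ℝ, 0 ≤ l → ∀ n, ∫⁻ s, ENNReal.ofReal (exp (-(l * (s : ℝ)))) ∂(cpow κ n)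
      = ENNReal.ofReal ((∫ s, exp (-(l * (s : ℝ))) ∂κ) ^ n) := by
    intro l hl n
    have hk : ∫⁻ s, ENNReal.ofReal (exp (-(l * (s : ℝ)))) ∂κ
        = ENNReal.ofReal (∫ s, exp (-(l * (s : ℝ))) ∂κ) :=
      (ofReal_integral_eq_lintegral_ofReal (hint l hl)
        (Eventually.of_forall fun _ => (exp_pos _).le)).symm
    have hj : 0 ≤ ∫ s, exp (-(l * (s : ℝ))) ∂κ := integral_nonneg fun _ => (exp_pos _).le
    induction n with
    | zero => simp [cpow, lintegral_dirac' _ (hmeas l)]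
    | succ n ih =>
      rw [cpow, Measure.lintegral_conv (hmeas l)]
      have : ∀ x y : NNReal, ENNReal.ofReal (exp (-(l * ((x + y : NNReal) : ℝ)))) =
          ENNReal.ofReal (exp (-(l * (x : ℝ)))) * ENNReal.ofReal (exp (-(l * (y : ℝ)))) := by
        intro x y
        rw [← ENNReal.ofReal_mul (exp_pos _).le, ← exp_add]
        congr 2
        push_cast
        ring
      simp_rw [this]
      simp_rw [lintegral_const_mul _ (hmeas l)]
      rw [lintegral_mul_const _ (hmeas l), ih, hk, ← ENNReal.ofReal_mul (by positivity), pow_succ]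
  set A := κ.real Set.univ with hA
  let μ : Measure NNReal := ENNReal.ofReal (exp (-A)) •
    Measure.sum (fun n : ℕ => ENNReal.ofReal ((n.factorial : ℝ)⁻¹) • cpow κ n)
  have hμ : ∀ l : ℝ, 0 ≤ l → ∫⁻ s, ENNReal.ofReal (exp (-(l * (s : ℝ)))) ∂μ =
      ENNReal.ofReal (exp (-∫ s, (1 - exp (-(l * (s : ℝ)))) ∂κ)) := by
    intro l hl
    have hj : 0 ≤ ∫ s, exp (-(l * (s : ℝ))) ∂κ := integral_nonneg fun _ => (exp_pos _).le
    simp only [μ, lintegral_smul_measure, lintegral_sum_measure, hpow l hl, smul_eq_mul]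
    have hs := NormedSpace.expSeries_div_hasSum_exp (∫ s, exp (-(l * (s : ℝ))) ∂κ)
    rw [← Real.exp_eq_exp_ℝ] at hs
    have : ∀ n : ℕ, ENNReal.ofReal ((n.factorial : ℝ)⁻¹) *
        ENNReal.ofReal ((∫ s, exp (-(l * (s : ℝ))) ∂κ) ^ n)
        = ENNReal.ofReal ((∫ s, exp (-(l * (s : ℝ))) ∂κ) ^ n / n.factorial) := by
      intro n
      rw [← ENNReal.ofReal_mul (by positivity)]
      congr 1
      field_simp
    simp_rw [this]
    rw [← ENNReal.ofReal_tsum_of_nonneg (fun n => by positivity) hs.summable, hs.tsum_eq,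
      ← ENNReal.ofReal_mul (exp_pos _).le, ← exp_add]
    congr 2
    rw [integral_sub (integrable_const _) (hint l hl)]
    simp [hA]
    ring
  have hfin : IsFiniteMeasure μ := by
    constructor
    have := hμ 0 le_rfl
    simp at this
    simp [this]
  refine ⟨μ, hfin, fun l hl => ?_⟩
  rw [integral_eq_lintegral_of_nonneg_ae (Eventually.of_forall fun _ => (exp_pos _).le)
    (by fun_prop), hμ l hl, ENNReal.toReal_ofReal (exp_pos _).le]

lemma levy_integrable (β : ℝ) (h0 : 0 < β) (h1 : β < 1) (l : ℝ) (hl : 0 ≤ l) :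
    IntegrableOn (fun s : ℝ => (1 - exp (-(l * s))) * s ^ (-1 - β)) (Set.Ioi 0) := by
  rw [← Set.Ioc_union_Ioi_eq_Ioi (zero_le_one (α := ℝ))]
  refine IntegrableOn.union ?_ ?_
  · have h : IntegrableOn (fun s : ℝ => l * s ^ (-β)) (Set.Ioc 0 1) := by
      refine Integrable.const_mul ?_ l
      have := intervalIntegral.intervalIntegrable_rpow' (a := 0) (b := 1) (r := -β) (by linarith)
      rwa [intervalIntegrable_iff_integrableOn_Ioc_of_le zero_le_one] at this
    refine Integrable.mono' h (by fun_prop) ?_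
    filter_upwards [ae_restrict_mem measurableSet_Ioc] with s hs
    have hs0 : 0 < s := hs.1
    have e1 : exp (-(l * s)) ≤ 1 := exp_le_one_iff.2 (by have := mul_nonneg hl hs0.le; linarith)
    have e2 := add_one_le_exp (-(l * s))
    rw [norm_of_nonneg (mul_nonneg (by linarith) (by positivity))]
    have : s ^ (-β) = s * s ^ (-1 - β) := by
      rw [show -β = 1 + (-1 - β) by ring, rpow_add hs0, rpow_one]
    rw [this, ← mul_assoc]
    gcongr
    linarith
  · have h := integrableOn_Ioi_rpow_of_lt (a := -1 - β) (by linarith) (zero_lt_one)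
    refine Integrable.mono' h (by fun_prop) ?_
    filter_upwards [ae_restrict_mem measurableSet_Ioi] with s hs
    have hs0 : 0 < s := lt_trans zero_lt_one hs
    have e1 : exp (-(l * s)) ≤ 1 := exp_le_one_iff.2 (by have := mul_nonneg hl hs0.le; linarith)
    have e2 := exp_pos (-(l * s))
    rw [norm_of_nonneg (mul_nonneg (by linarith) (by positivity))]
    have : 0 ≤ s ^ (-1 - β) := by positivity
    nlinarith

lemma levy_scale (β : ℝ) (h0 : 0 < β) (l : ℝ) (hl : 0 ≤ l) :
    ∫ s in Set.Ioi (0 : ℝ), (1 - exp (-(l * s))) * s ^ (-1 - β) =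
      l ^ β * ∫ s in Set.Ioi (0 : ℝ), (1 - exp (-s)) * s ^ (-1 - β) := by
  rcases hl.eq_or_lt with rfl | hl
  · simp [zero_rpow h0.ne']
  have := integral_comp_mul_left_Ioi (fun s => (1 - exp (-s)) * s ^ (-1 - β)) 0 hl
  simp only [mul_zero, smul_eq_mul] at this
  have h2 : ∫ x in Set.Ioi (0 : ℝ), (1 - exp (-(l * x))) * (l * x) ^ (-1 - β) =
      l ^ (-1 - β) * ∫ s in Set.Ioi (0 : ℝ), (1 - exp (-(l * s))) * s ^ (-1 - β) := by
    rw [← integral_const_mul]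
    refine setIntegral_congr_fun measurableSet_Ioi fun s hs => ?_
    rw [mul_rpow hl.le (le_of_lt hs)]
    ring
  rw [h2] at this
  have h3 : l ^ β = l⁻¹ * (l ^ (-1 - β))⁻¹ := by
    rw [← rpow_neg hl.le, ← rpow_neg_one, ← rpow_add hl]; congr 1; ring
  have h4 : 0 < l ^ (-1 - β) := by positivity
  rw [h3]
  field_simp at this ⊢
  linarith

lemma levy_pos (β : ℝ) (h0 : 0 < β) (h1 : β < 1) :
    0 < ∫ s in Set.Ioi (0 : ℝ), (1 - exp (-s)) * s ^ (-1 - β) := by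
  have hi := levy_integrable β h0 h1 1 zero_le_one
  simp only [one_mul] at hi
  have hp : ∀ s ∈ Set.Ioi (0 : ℝ), 0 < (1 - exp (-s)) * s ^ (-1 - β) := by
    intro s hs
    have hs0 : 0 < s := hs
    have : exp (-s) < 1 := by simpa using hs0
    exact mul_pos (by linarith) (by positivity)
  rw [setIntegral_pos_iff_support_of_nonneg_ae]
  · refine lt_of_lt_of_le ?_ (measure_mono (μ := volume) (s := Set.Ioi (0 : ℝ)) ?_)
    · simp
    · intro s hs
      exact ⟨(hp s hs).ne', hs⟩
  · filter_upwards [ae_restrict_mem measurableSet_Ioi] with s hs using (hp s hs).le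
  · exact hi

lemma exists_sub (β : ℝ) (h0 : 0 < β) (h1 : β < 1) :
    ∃ μ : ℕ → Measure NNReal, (∀ n, IsFiniteMeasure (μ n)) ∧
      (∀ n, ∀ l : ℝ, 0 ≤ l → ∫ s, exp (-(l * (s : ℝ))) ∂(μ n) ≤ 1) ∧
      ∀ l : ℝ, 0 ≤ l → Tendsto (fun n => ∫ s, exp (-(l * (s : ℝ))) ∂(μ n)) atTop
        (𝓝 (exp (-(l ^ β)))) := by
  set I := ∫ s in Set.Ioi (0 : ℝ), (1 - exp (-s)) * s ^ (-1 - β) with hI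
  have hIpos : 0 < I := levy_pos β h0 h1
  let ε : ℕ → ℝ := fun n => 1 / ((n : ℝ) + 1)
  have hε : ∀ n, 0 < ε n := fun n => by positivity
  let D : ℝ → ENNReal := fun s => ENNReal.ofReal (I⁻¹ * s ^ (-1 - β))
  have hD : Measurable D := by fun_prop
  let κ : ℕ → Measure NNReal := fun n =>
    ((volume.restrict (Set.Ioi (ε n))).withDensity D).map Real.toNNReal
  have hDi : ∀ n, IntegrableOn (fun s : ℝ => I⁻¹ * s ^ (-1 - β)) (Set.Ioi (ε n)) := fun n =>
    (integrableOn_Ioi_rpow_of_lt (a := -1 - β) (by linarith) (hε n)).const_mul _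
  have hκ : ∀ n, IsFiniteMeasure (κ n) := by
    intro n
    have : IsFiniteMeasure ((volume.restrict (Set.Ioi (ε n))).withDensity D) :=
      isFiniteMeasure_withDensity_ofReal (hDi n).2
    infer_instance
  have hκi : ∀ n, ∀ l : ℝ, 0 ≤ l → ∫ s, (1 - exp (-(l * (s : ℝ)))) ∂(κ n) =
      I⁻¹ * ∫ s in Set.Ioi (ε n), (1 - exp (-(l * s))) * s ^ (-1 - β) := by
    intro n l hl
    rw [integral_map (by fun_prop) (by fun_prop), integral_withDensity_eq_integral_toReal_smul hD
      (Eventually.of_forall fun _ => ENNReal.ofReal_lt_top), ← integral_const_mul]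
    refine setIntegral_congr_fun measurableSet_Ioi fun s hs => ?_
    have hs0 : 0 < s := (hε n).trans hs
    simp only [D, smul_eq_mul]
    rw [ENNReal.toReal_ofReal (by positivity), Real.coe_toNNReal _ hs0.le]
    ring
  choose μ hμ hL using fun n => exists_cpoisson (κ n)
  refine ⟨μ, hμ, fun n l hl => ?_, fun l hl => ?_⟩
  · rw [hL n l hl, exp_le_one_iff, neg_nonpos]
    refine integral_nonneg fun s => ?_
    have := mul_nonneg hl s.2
    simp only [Pi.zero_apply, sub_nonneg, exp_le_one_iff]
    simpa using this
  · simp_rw [fun n => hL n l hl, fun n => hκi n l hl]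
    refine (continuous_exp.tendsto _).comp (Tendsto.neg ?_)
    have hlim : l ^ β = I⁻¹ * ∫ s in Set.Ioi (0 : ℝ), (1 - exp (-(l * s))) * s ^ (-1 - β) := by
      rw [levy_scale β h0 l hl, ← hI]; field_simp
    rw [hlim]
    refine Tendsto.const_mul _ ?_
    have hU : Set.Ioi (0 : ℝ) = ⋃ n, Set.Ioi (ε n) := by
      ext s
      simp only [Set.mem_Ioi, Set.mem_iUnion]
      exact ⟨fun hs => exists_nat_one_div_lt hs, fun ⟨n, hn⟩ => (hε n).trans hn⟩
    rw [hU]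
    refine tendsto_setIntegral_of_monotone (fun _ => measurableSet_Ioi) ?_ ?_
    · intro m n hmn
      exact Set.Ioi_subset_Ioi (one_div_le_one_div_of_le (by positivity) (by simpa using hmn))
    · rw [← hU]; exact levy_integrable β h0 h1 l hl

lemma integrable_stable (d : ℕ) (hd : 1 ≤ d) (α : ℝ) (hα : 0 < α) :
    Integrable (fun ξ : EuclideanSpace ℝ (Fin d) => exp (-(‖ξ‖ ^ α))) := by
  have : Nonempty (Fin d) := ⟨⟨0, hd⟩⟩
  rw [integrable_fun_norm_addHaar (μ := (volume : Measure (EuclideanSpace ℝ (Fin d))))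
    (f := fun r => exp (-(r ^ α)))]
  have h := integrableOn_rpow_mul_exp_neg_rpow (p := α) (s := ((d - 1 : ℕ) : ℝ))
    (by have : (0 : ℝ) ≤ ((d - 1 : ℕ) : ℝ) := by positivity
        linarith) hα
  simpa [rpow_natCast] using h

lemma gauss_int (d : ℕ) (x : EuclideanSpace ℝ (Fin d)) (s : ℝ) (hs : 0 < s) :
    Integrable (fun ξ : EuclideanSpace ℝ (Fin d) => exp (-(s * ‖ξ‖ ^ 2)) * cos ⟪x, ξ⟫) ∧
    ∫ ξ : EuclideanSpace ℝ (Fin d), exp (-(s * ‖ξ‖ ^ 2)) * cos ⟪x, ξ⟫ =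
      (π / s) ^ ((d : ℝ) / 2) * exp (-(‖x‖ ^ 2 / (4 * s))) := by
  have hb : 0 < (s : ℂ).re := by simpa
  have h1 := GaussianFourier.integrable_cexp_neg_mul_sq_norm_add hb Complex.I x
  have h2 := GaussianFourier.integral_cexp_neg_mul_sq_norm_add hb Complex.I x
  have hre : ∀ ξ : EuclideanSpace ℝ (Fin d),
      (Complex.exp (-(s : ℂ) * (‖ξ‖ : ℂ) ^ 2 + Complex.I * (⟪x, ξ⟫ : ℝ))).re =
      exp (-(s * ‖ξ‖ ^ 2)) * cos ⟪x, ξ⟫ := by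
    intro ξ
    rw [Complex.exp_re]
    have e : (-(s : ℂ) * (‖ξ‖ : ℂ) ^ 2 + Complex.I * (⟪x, ξ⟫ : ℝ)) =
      ((-(s * ‖ξ‖ ^ 2) : ℝ) : ℂ) + (⟪x, ξ⟫ : ℝ) * Complex.I := by push_cast; ring
    rw [e]
    simp only [Complex.add_re, Complex.ofReal_re, Complex.re_ofReal_mul, Complex.I_re, mul_zero,
      add_zero, Complex.add_im, Complex.ofReal_im, Complex.im_ofReal_mul, Complex.I_im, mul_one,
      zero_add]
  refine ⟨?_, ?_⟩
  · have := h1.re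
    refine this.congr (Eventually.of_forall fun ξ => ?_)
    exact hre ξ
  · calc ∫ ξ : EuclideanSpace ℝ (Fin d), exp (-(s * ‖ξ‖ ^ 2)) * cos ⟪x, ξ⟫
        = ∫ ξ : EuclideanSpace ℝ (Fin d),
          RCLike.re (Complex.exp (-(s : ℂ) * (‖ξ‖ : ℂ) ^ 2 + Complex.I * (⟪x, ξ⟫ : ℝ))) :=
          integral_congr_ae (Eventually.of_forall fun ξ => (hre ξ).symm)
      _ = RCLike.re (∫ ξ : EuclideanSpace ℝ (Fin d),
          Complex.exp (-(s : ℂ) * (‖ξ‖ : ℂ) ^ 2 + Complex.I * (⟪x, ξ⟫ : ℝ))) :=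
          integral_re h1
      _ = (((π / s) ^ ((d : ℝ) / 2) * exp (-(‖x‖ ^ 2 / (4 * s))) : ℝ) : ℂ).re := by
          rw [h2]
          simp only [finrank_euclideanSpace, Fintype.card_fin, RCLike.re_eq_complex_re]
          congr 1
          rw [Complex.ofReal_mul, Complex.ofReal_cpow (by positivity), Complex.ofReal_exp]
          push_cast
          congr 2
          rw [Complex.I_sq]; ring
      _ = _ := Complex.ofReal_re _

lemma core_delta (d : ℕ) (hd : 1 ≤ d) (α : ℝ) (hα0 : 0 < α) (hα2 : α < 2)
    (x : EuclideanSpace ℝ (Fin d)) (A : ℝ) {k : ℕ} (b l : Fin k → ℝ) (hl : ∀ i, 0 ≤ l i)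
    (hF : ∀ s : ℝ, 0 < s → 0 ≤ A * ((π / s) ^ ((d : ℝ) / 2) * exp (-(‖x‖ ^ 2 / (4 * s)))) +
      ∑ i, b i * exp (-(l i * s))) (δ : ℝ) (hδ : 0 < δ) :
    0 ≤ A * (∫ ξ : EuclideanSpace ℝ (Fin d), exp (-(‖ξ‖ ^ α)) *
        (exp (-(δ * ‖ξ‖ ^ 2)) * cos ⟪x, ξ⟫)) +
      ∑ i, b i * (exp (-(l i ^ (α / 2))) * exp (-(δ * l i))) := by
  obtain ⟨μ, hfin, hle, hlim⟩ := exists_sub (α / 2) (by linarith) (by linarith)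
  have hg := gauss_int d x δ hδ
  have hg0 := gauss_int d 0 δ hδ
  simp only [inner_zero_left, cos_zero, mul_one] at hg0
  have hexp1 : ∀ (l : ℝ), 0 ≤ l → ∀ s : NNReal, exp (-(l * (s : ℝ))) ≤ 1 := by
    intro l hl s
    exact exp_le_one_iff.2 (by have := mul_nonneg hl s.2; simp at this ⊢; linarith)
  have hn : ∀ n, 0 ≤ A * (∫ ξ : EuclideanSpace ℝ (Fin d),
      (∫ s, exp (-(‖ξ‖ ^ 2 * (s : ℝ))) ∂(μ n)) * (exp (-(δ * ‖ξ‖ ^ 2)) * cos ⟪x, ξ⟫)) +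
      ∑ i, b i * ((∫ s, exp (-(l i * (s : ℝ))) ∂(μ n)) * exp (-(δ * l i))) := by
    intro n
    have := hfin n
    have hprod : Integrable (Function.uncurry fun (s : NNReal) (ξ : EuclideanSpace ℝ (Fin d)) =>
        exp (-((s + δ) * ‖ξ‖ ^ 2)) * cos ⟪x, ξ⟫) ((μ n).prod volume) := by
      refine Integrable.mono' (g := fun z => 1 * exp (-(δ * ‖z.2‖ ^ 2)))
        ((integrable_const (1 : ℝ)).mul_prod hg0.1) ?_ (Eventually.of_forall ?_)
      · refine Continuous.aestronglyMeasurable ?_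
        simp only [Function.uncurry_def]
        fun_prop
      · rintro ⟨s, ξ⟩
        simp only [Function.uncurry_apply_pair, norm_mul, one_mul]
        rw [norm_of_nonneg (exp_pos _).le]
        have h1 : ‖cos ⟪x, ξ⟫‖ ≤ 1 := abs_cos_le_one _
        have h2 : exp (-((s + δ) * ‖ξ‖ ^ 2)) ≤ exp (-(δ * ‖ξ‖ ^ 2)) := by
          apply exp_le_exp.2
          have : 0 ≤ (s : ℝ) * ‖ξ‖ ^ 2 := by positivity
          nlinarith
        calc _ ≤ exp (-(δ * ‖ξ‖ ^ 2)) * 1 := by gcongr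
          _ = _ := mul_one _
    have hsw := integral_integral_swap hprod
    have e1 : ∀ s : NNReal, ∫ ξ : EuclideanSpace ℝ (Fin d),
        exp (-((s + δ) * ‖ξ‖ ^ 2)) * cos ⟪x, ξ⟫ =
        (π / (s + δ)) ^ ((d : ℝ) / 2) * exp (-(‖x‖ ^ 2 / (4 * (s + δ)))) := fun s =>
      (gauss_int d x (s + δ) (by positivity)).2
    have hGi : Integrable (fun s : NNReal =>
        (π / (s + δ)) ^ ((d : ℝ) / 2) * exp (-(‖x‖ ^ 2 / (4 * (s + δ))))) (μ n) := by
      have := hprod.integral_prod_left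
      simp only [Function.uncurry_apply_pair] at this
      simpa only [e1] using this
    have e2 : ∀ ξ : EuclideanSpace ℝ (Fin d),
        ∫ s : NNReal, exp (-((s + δ) * ‖ξ‖ ^ 2)) * cos ⟪x, ξ⟫ ∂(μ n) =
        (∫ s, exp (-(‖ξ‖ ^ 2 * (s : ℝ))) ∂(μ n)) * (exp (-(δ * ‖ξ‖ ^ 2)) * cos ⟪x, ξ⟫) := by
      intro ξ
      rw [← integral_mul_const]
      refine integral_congr_ae (Eventually.of_forall fun s => ?_)
      simp only
      rw [← mul_assoc, ← exp_add]
      congr 2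
      ring
    simp only [e1, e2] at hsw
    rw [← hsw]
    have e3 : ∀ i, (∫ s, exp (-(l i * (s : ℝ))) ∂(μ n)) * exp (-(δ * l i)) =
        ∫ s : NNReal, exp (-(l i * (s + δ))) ∂(μ n) := by
      intro i
      rw [← integral_mul_const]
      refine integral_congr_ae (Eventually.of_forall fun s => ?_)
      simp only
      rw [← exp_add]
      congr 1
      ring
    have hEi : ∀ i, Integrable (fun s : NNReal => exp (-(l i * (s + δ)))) (μ n) := by
      intro i
      refine Integrable.mono' (integrable_const (1 : ℝ)) (by fun_prop) (Eventually.of_forall ?_)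
      intro s
      rw [norm_of_nonneg (exp_pos _).le]
      exact exp_le_one_iff.2 (by
        have := mul_nonneg (hl i) (show (0 : ℝ) ≤ s + δ by positivity); linarith)
    simp_rw [e3, ← integral_const_mul]
    rw [← integral_finsetSum _ (fun i _ => (hEi i).const_mul _), ← integral_add (hGi.const_mul _)
      (integrable_finsetSum _ (fun i _ => (hEi i).const_mul _))]
    exact integral_nonneg fun s => hF (s + δ) (by positivity)
  refine ge_of_tendsto' (x := atTop) ?_ hn
  refine Tendsto.add (Tendsto.const_mul _ ?_) (tendsto_finset_sum _ fun i _ =>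
    ((hlim (l i) (hl i)).mul_const _).const_mul _)
  refine tendsto_integral_of_dominated_convergence (fun ξ => exp (-(δ * ‖ξ‖ ^ 2))) ?_ hg0.1 ?_ ?_
  · intro n
    have := hfin n
    refine AEStronglyMeasurable.mul ?_ (by fun_prop)
    refine StronglyMeasurable.aestronglyMeasurable ?_
    refine StronglyMeasurable.integral_prod_right (f := fun (ξ : EuclideanSpace ℝ (Fin d))
      (s : NNReal) => exp (-(‖ξ‖ ^ 2 * (s : ℝ)))) ?_
    refine Continuous.stronglyMeasurable ?_
    simp only [Function.uncurry_def]
    fun_prop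
  · intro n
    refine Eventually.of_forall fun ξ => ?_
    have h0 : 0 ≤ ∫ s, exp (-(‖ξ‖ ^ 2 * (s : ℝ))) ∂(μ n) := integral_nonneg fun _ => (exp_pos _).le
    rw [norm_mul, norm_mul, norm_of_nonneg h0, norm_of_nonneg (exp_pos _).le]
    have h1 : ‖cos ⟪x, ξ⟫‖ ≤ 1 := abs_cos_le_one _
    have h2 := hle n (‖ξ‖ ^ 2) (by positivity)
    calc _ ≤ 1 * (exp (-(δ * ‖ξ‖ ^ 2)) * 1) := by gcongr
      _ = _ := by ring
  · refine Eventually.of_forall fun ξ => Tendsto.mul_const _ ?_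
    have := hlim (‖ξ‖ ^ 2) (by positivity)
    rwa [← rpow_two, ← rpow_mul (norm_nonneg _), show 2 * (α / 2) = α by ring, rpow_two] at this

lemma core (d : ℕ) (hd : 1 ≤ d) (α : ℝ) (hα0 : 0 < α) (hα2 : α < 2)
    (x : EuclideanSpace ℝ (Fin d)) (A : ℝ) {k : ℕ} (b l : Fin k → ℝ) (hl : ∀ i, 0 ≤ l i)
    (hF : ∀ s : ℝ, 0 < s → 0 ≤ A * ((π / s) ^ ((d : ℝ) / 2) * exp (-(‖x‖ ^ 2 / (4 * s)))) +
      ∑ i, b i * exp (-(l i * s))) :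
    0 ≤ A * (∫ ξ : EuclideanSpace ℝ (Fin d), exp (-(‖ξ‖ ^ α)) * cos ⟪x, ξ⟫) +
      ∑ i, b i * exp (-(l i ^ (α / 2))) := by
  have hε : Tendsto (fun n : ℕ => 1 / ((n : ℝ) + 1)) atTop (𝓝 0) :=
    tendsto_one_div_add_atTop_nhds_zero_nat
  have key : ∀ c : ℝ, Tendsto (fun n : ℕ => exp (-(1 / ((n : ℝ) + 1) * c))) atTop (𝓝 1) := by
    intro c
    have := (continuous_exp.tendsto _).comp (hε.mul_const c).neg
    simpa [Function.comp_def] using this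
  refine ge_of_tendsto' (x := (atTop : Filter ℕ)) ?_
    (fun n => core_delta d hd α hα0 hα2 x A b l hl hF (1 / ((n : ℝ) + 1)) (by positivity))
  refine Tendsto.add (Tendsto.const_mul _ ?_) (tendsto_finset_sum _ fun i _ => ?_)
  · refine tendsto_integral_of_dominated_convergence (fun ξ => exp (-(‖ξ‖ ^ α))) ?_
      (integrable_stable d hd α hα0) ?_ ?_
    · intro n
      fun_prop
    · intro n
      refine Eventually.of_forall fun ξ => ?_
      rw [norm_mul, norm_mul, norm_of_nonneg (exp_pos _).le, norm_of_nonneg (exp_pos _).le]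
      have h1 : ‖cos ⟪x, ξ⟫‖ ≤ 1 := abs_cos_le_one _
      have h2 : exp (-(1 / ((n : ℝ) + 1) * ‖ξ‖ ^ 2)) ≤ 1 := exp_le_one_iff.2 (by
        have : 0 ≤ 1 / ((n : ℝ) + 1) * ‖ξ‖ ^ 2 := by positivity
        linarith)
      calc _ ≤ exp (-(‖ξ‖ ^ α)) * (1 * 1) := by gcongr
        _ = _ := by ring
    · refine Eventually.of_forall fun ξ => ?_
      have := ((key (‖ξ‖ ^ 2)).mul_const (cos ⟪x, ξ⟫)).const_mul (exp (-(‖ξ‖ ^ α)))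
      simpa using this
  · have := ((key (l i)).const_mul (exp (-(l i ^ (α / 2))))).const_mul (b i)
    simpa using this

lemma one_sub_exp_lower {u : ℝ} (h0 : 0 ≤ u) (h1 : u ≤ 1) : u / 2 ≤ 1 - exp (-u) := by
  have h := add_one_le_exp u
  have h2 : exp (-u) ≤ (1 + u)⁻¹ := by
    rw [exp_neg]
    exact inv_anti₀ (by linarith) (by linarith)
  have h3 : (1 + u)⁻¹ ≤ 1 - u / 2 := by
    rw [inv_le_iff_one_le_mul₀ (by linarith)]
    nlinarith
  linarith

lemma one_sub_exp_half {u : ℝ} (h1 : 1 ≤ u) : 1 / 2 ≤ 1 - exp (-u) := by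
  have h := one_sub_exp_lower (u := 1) zero_le_one le_rfl
  have : exp (-u) ≤ exp (-1) := exp_le_exp.2 (by linarith)
  linarith

lemma one_sub_exp_upper (u : ℝ) : 1 - exp (-u) ≤ u := by
  have := add_one_le_exp (-u); linarith

lemma one_sub_exp_nonneg {u : ℝ} (h : 0 ≤ u) : 0 ≤ 1 - exp (-u) := by
  have : exp (-u) ≤ 1 := exp_le_one_iff.2 (by linarith)
  linarith

lemma test_upper (h : ℝ) (hh : 0 < h) : ∃ C : ℝ, 0 < C ∧ ∀ u : ℝ, 0 < u →
    u ^ (-h) * exp (-(1 / (4 * u))) ≤ C * (1 - exp (-u)) := by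
  set k := h + 1 with hk
  have hk0 : 0 < k := by linarith
  refine ⟨2 * (4 * k) ^ k + 2, by positivity, fun u hu => ?_⟩
  have hB : 0 < (4 * k) ^ k := by positivity
  rcases le_total u 1 with h1 | h1
  · have hb := one_sub_exp_lower hu.le h1
    have hm : u ^ (-k) * exp (-(1 / (4 * u))) ≤ (4 * k) ^ k := by
      have e1 : 1 / (4 * u) / k ≤ exp (1 / (4 * u) / k) := by
        have := add_one_le_exp (1 / (4 * u) / k); linarith
      have e2 : (1 / (4 * u) / k) ^ k ≤ exp (1 / (4 * u)) := by
        calc (1 / (4 * u) / k) ^ k ≤ (exp (1 / (4 * u) / k)) ^ k :=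
              rpow_le_rpow (by positivity) e1 hk0.le
          _ = exp (1 / (4 * u)) := by rw [← exp_mul]; congr 1; field_simp
      have e3 : u ^ (-k) = (4 * k) ^ k * (1 / (4 * u) / k) ^ k := by
        rw [← mul_rpow (by positivity) (by positivity), rpow_neg hu.le, ← inv_rpow hu.le]
        congr 1
        field_simp
      rw [e3, mul_assoc]
      calc (4 * k) ^ k * ((1 / (4 * u) / k) ^ k * exp (-(1 / (4 * u))))
          ≤ (4 * k) ^ k * (exp (1 / (4 * u)) * exp (-(1 / (4 * u)))) := by gcongr
        _ = (4 * k) ^ k := by rw [← exp_add]; simp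
    have e4 : u ^ (-h) = u * u ^ (-k) := by
      rw [show -h = 1 + -k by rw [hk]; ring, rpow_add hu, rpow_one]
    rw [e4, mul_assoc]
    calc u * (u ^ (-k) * exp (-(1 / (4 * u)))) ≤ u * (4 * k) ^ k := by gcongr
      _ ≤ _ := by nlinarith
  · have hb := one_sub_exp_half h1
    have a1 : u ^ (-h) ≤ 1 := rpow_le_one_of_one_le_of_nonpos h1 (by linarith)
    have a2 : exp (-(1 / (4 * u))) ≤ 1 := exp_le_one_iff.2 (by
      have : 0 ≤ 1 / (4 * u) := by positivity
      linarith)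
    have : u ^ (-h) * exp (-(1 / (4 * u))) ≤ 1 := mul_le_one₀ a1 (exp_pos _).le a2
    nlinarith

lemma test_lower (h a K : ℝ) (hh : 0 < h) (ha : 0 < a) (ha1 : a ≤ 1) (hK : 1 ≤ K) (u : ℝ)
    (hu : 0 < u) :
    K ^ (-h) * exp (-(1 / (4 * a))) *
      ((1 - exp (-u)) - 2 * a * (1 - exp (-(u / a))) - 2 * (1 - exp (-(u / K)))) ≤
    u ^ (-h) * exp (-(1 / (4 * u))) := by
  have hK0 : 0 < K := by linarith
  have n1 := one_sub_exp_nonneg (u := u / a) (by positivity)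
  have n2 := one_sub_exp_nonneg (u := u / K) (by positivity)
  have n3 := one_sub_exp_upper u
  have n4 := exp_pos (-u)
  have hpos : 0 ≤ u ^ (-h) * exp (-(1 / (4 * u))) := by positivity
  have hc : 0 ≤ K ^ (-h) * exp (-(1 / (4 * a))) := by positivity
  rcases le_total u a with h1 | h1
  · refine le_trans (mul_nonpos_of_nonneg_of_nonpos hc ?_) hpos
    have := one_sub_exp_lower (u := u / a) (by positivity) ((div_le_one ha).2 h1)
    have h2 : u ≤ 2 * a * (1 - exp (-(u / a))) := by
      calc u = 2 * a * (u / a / 2) := by field_simp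
        _ ≤ _ := by gcongr
    linarith
  rcases le_total K u with h2 | h2
  · refine le_trans (mul_nonpos_of_nonneg_of_nonpos hc ?_) hpos
    have := one_sub_exp_half (u := u / K) ((one_le_div hK0).2 h2)
    have : 0 ≤ 2 * a * (1 - exp (-(u / a))) := by positivity
    linarith
  · have h3 : (1 - exp (-u)) - 2 * a * (1 - exp (-(u / a))) - 2 * (1 - exp (-(u / K))) ≤ 1 := by
      have : 0 ≤ 2 * a * (1 - exp (-(u / a))) := by positivity
      linarith
    calc _ ≤ K ^ (-h) * exp (-(1 / (4 * a))) * 1 := by gcongr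
      _ = K ^ (-h) * exp (-(1 / (4 * a))) := mul_one _
      _ ≤ u ^ (-h) * exp (-(1 / (4 * u))) := by
        have : K ^ (-h) ≤ u ^ (-h) := rpow_le_rpow_of_nonpos hu h2 (by linarith)
        gcongr

lemma scale_gauss (h R s : ℝ) (hR : 0 < R) (hs : 0 < s) :
    (π / s) ^ h * exp (-(R / (4 * s))) =
      π ^ h * R ^ (-h) * ((s / R) ^ (-h) * exp (-(1 / (4 * (s / R))))) := by
  have e1 : 1 / (4 * (s / R)) = R / (4 * s) := by field_simp
  rw [e1, div_rpow hs.le hR.le, div_rpow pi_pos.le hs.le, rpow_neg hR.le, rpow_neg hs.le]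
  have : 0 < R ^ h := by positivity
  have : 0 < s ^ h := by positivity
  field_simp

lemma upper_bound (d : ℕ) (hd : 1 ≤ d) (α : ℝ) (hα0 : 0 < α) (hα2 : α < 2) :
    ∃ C : ℝ, 0 < C ∧ ∀ x : EuclideanSpace ℝ (Fin d), x ≠ 0 →
      ∫ ξ : EuclideanSpace ℝ (Fin d), exp (-(‖ξ‖ ^ α)) * cos ⟪x, ξ⟫ ≤
        C * (‖x‖ ^ 2) ^ (-((d : ℝ) / 2 + α / 2)) := by
  have hd0 : (0 : ℝ) < d := by exact_mod_cast hd
  obtain ⟨C, hC, hu⟩ := test_upper ((d : ℝ) / 2) (by positivity)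
  refine ⟨C * π ^ ((d : ℝ) / 2), by positivity, fun x hx => ?_⟩
  set R := ‖x‖ ^ 2 with hR
  have hR0 : 0 < R := by have := norm_pos_iff.2 hx; positivity
  set M := π ^ ((d : ℝ) / 2) * R ^ (-((d : ℝ) / 2)) * C with hM
  have hM0 : 0 < M := by positivity
  have := core d hd α hα0 hα2 x (-1) ![M, -M] ![0, 1 / R] (by
    intro i; fin_cases i
    · simp
    · simp [hR0.le]) (by
    intro s hs
    rw [← hR, scale_gauss _ R s hR0 hs]
    have h2 := hu (s / R) (by positivity)
    simp only [Fin.sum_univ_two, Matrix.cons_val_zero, Matrix.cons_val_one]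
    rw [show 1 / R * s = s / R by ring]
    simp only [zero_mul, neg_zero, exp_zero]
    have h3 := mul_le_mul_of_nonneg_left h2
      (show 0 ≤ π ^ ((d : ℝ) / 2) * R ^ (-((d : ℝ) / 2)) by positivity)
    rw [← mul_assoc _ C, ← hM] at h3
    linarith)
  simp only [Fin.sum_univ_two, Matrix.cons_val_zero, Matrix.cons_val_one] at this
  rw [zero_rpow (by linarith)] at this
  simp only [neg_zero, exp_zero] at this
  have h4 := one_sub_exp_upper ((1 / R) ^ (α / 2))
  have h5 : (1 / R) ^ (α / 2) = R ^ (-(α / 2)) := by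
    rw [one_div, inv_rpow hR0.le, rpow_neg hR0.le]
  rw [neg_add, rpow_add hR0]
  have h6 := mul_le_mul_of_nonneg_left h4 hM0.le
  rw [h5] at h6 this
  calc _ ≤ M * R ^ (-(α / 2)) := by linarith
    _ = _ := by rw [hM]; ring

lemma lower_bound (d : ℕ) (hd : 1 ≤ d) (α : ℝ) (hα0 : 0 < α) (hα2 : α < 2) :
    ∃ c : ℝ, 0 < c ∧ ∀ (x : EuclideanSpace ℝ (Fin d)) (R : ℝ), 1 ≤ R → ‖x‖ ^ 2 ≤ R →
      c * R ^ (-((d : ℝ) / 2 + α / 2)) ≤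
      ∫ ξ : EuclideanSpace ℝ (Fin d), exp (-(‖ξ‖ ^ α)) * cos ⟪x, ξ⟫ := by
  have hd0 : (0 : ℝ) < d := by exact_mod_cast hd
  set β := α / 2 with hβ
  have hβ0 : 0 < β := by rw [hβ]; linarith
  have hβ1 : β < 1 := by rw [hβ]; linarith
  set a : ℝ := (1 / 16) ^ (1 / (1 - β)) with ha
  set K : ℝ := 16 ^ (1 / β) with hK
  have ha0 : 0 < a := by positivity
  have h1b : 0 < 1 - β := by linarith
  have ha1 : a ≤ 1 := rpow_le_one (by norm_num) (by norm_num) (by positivity)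
  have hK1 : 1 ≤ K := one_le_rpow (by norm_num) (by positivity)
  have hK0 : 0 < K := by linarith
  have haa : a ^ (1 - β) = 1 / 16 := by
    rw [ha, ← rpow_mul (by norm_num), one_div_mul_cancel h1b.ne', rpow_one]
  have hKK : K ^ β = 16 := by
    rw [hK, ← rpow_mul (by norm_num), one_div_mul_cancel hβ0.ne', rpow_one]
  set e := K ^ (-((d : ℝ) / 2)) * exp (-(1 / (4 * a))) with he
  have he0 : 0 < e := by positivity
  refine ⟨π ^ ((d : ℝ) / 2) * e / 4, by positivity, fun x R hR hx => ?_⟩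
  have hR0 : 0 < R := by linarith
  set N := π ^ ((d : ℝ) / 2) * R ^ (-((d : ℝ) / 2)) * e with hN
  have hN0 : 0 < N := by positivity
  have := core d hd α hα0 hα2 x 1 ![-N * (1 - 2 * a - 2), N, -N * (2 * a), -N * 2]
    ![0, 1 / R, 1 / (a * R), 1 / (K * R)] (by
    intro i; fin_cases i
    · simp
    · simp; positivity
    · simp; positivity
    · simp; positivity) (by
    intro s hs
    have h2 := test_lower ((d : ℝ) / 2) a K (by positivity) ha0 ha1 hK1 (s / R) (by positivity)
    rw [← he] at h2
    simp only [Fin.sum_univ_four, Matrix.cons_val]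
    rw [show 1 / R * s = s / R by ring, show 1 / (a * R) * s = s / R / a by field_simp,
      show 1 / (K * R) * s = s / R / K by field_simp]
    simp only [zero_mul, neg_zero, exp_zero]
    have h3 := mul_le_mul_of_nonneg_left h2
      (show 0 ≤ π ^ ((d : ℝ) / 2) * R ^ (-((d : ℝ) / 2)) by positivity)
    rw [← scale_gauss _ R s hR0 hs, ← mul_assoc, ← hN] at h3
    have h4 : (π / s) ^ ((d : ℝ) / 2) * exp (-(R / (4 * s))) ≤
      (π / s) ^ ((d : ℝ) / 2) * exp (-(‖x‖ ^ 2 / (4 * s))) := by gcongr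
    linarith)
  simp only [Fin.sum_univ_four, Matrix.cons_val] at this
  rw [← hβ, zero_rpow hβ0.ne'] at this
  simp only [neg_zero, exp_zero] at this
  set w := R ^ (-β) with hw
  have hw0 : 0 < w := by positivity
  have hw1 : w ≤ 1 := rpow_le_one_of_one_le_of_nonpos hR (by linarith)
  have w1 : (1 / R) ^ β = w := by rw [one_div, inv_rpow hR0.le, hw, rpow_neg hR0.le]
  have w2 : a * (1 / (a * R)) ^ β = w / 16 := by
    rw [one_div, inv_rpow (by positivity), mul_rpow ha0.le hR0.le, hw, rpow_neg hR0.le,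
      div_eq_mul_one_div, ← haa, rpow_sub ha0, rpow_one, mul_inv]
    ring
  have w3 : (1 / (K * R)) ^ β = w / 16 := by
    rw [one_div, inv_rpow (by positivity), mul_rpow hK0.le hR0.le, hw, rpow_neg hR0.le, hKK,
      mul_inv]
    ring
  have i1 := one_sub_exp_lower hw0.le hw1
  have i2 := mul_le_mul_of_nonneg_left (one_sub_exp_upper ((1 / (a * R)) ^ β)) ha0.le
  have i3 := one_sub_exp_upper ((1 / (K * R)) ^ β)
  rw [w2] at i2
  rw [w3] at i3 this
  rw [w1] at this
  have i4 : w / 4 ≤ (1 - exp (-w)) - 2 * (a * (1 - exp (-(1 / (a * R)) ^ β)))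
    - 2 * (1 - exp (-(w / 16))) := by linarith
  have i5 := mul_le_mul_of_nonneg_left i4 hN0.le
  rw [neg_add, rpow_add hR0, ← hw]
  calc _ = N * (w / 4) := by rw [hN]; ring
    _ ≤ _ := i5
    _ ≤ _ := by linarith

theorem stmt_9 (d : ℕ) (hd : 1 ≤ d) (α : ℝ) (hα0 : 0 < α) (hα2 : α < 2)
    (ν : EuclideanSpace ℝ (Fin d) → ℝ)
    (hν : ∀ y : EuclideanSpace ℝ (Fin d), y ≠ 0 →
      ν y = (2 : ℝ) ^ α * Real.Gamma (((d : ℝ) + α) / 2) /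
        (Real.pi ^ ((d : ℝ) / 2) * |Real.Gamma (-α / 2)|) * ‖y‖ ^ (-((d : ℝ) + α)))
    (p : ℝ → EuclideanSpace ℝ (Fin d) → ℝ)
    (hp : ∀ t : ℝ, 0 < t → ∀ x : EuclideanSpace ℝ (Fin d),
      p t x = (2 * Real.pi) ^ (-(d : ℝ)) *
        ∫ ξ : EuclideanSpace ℝ (Fin d), Real.exp (-(t * ‖ξ‖ ^ α)) * Real.cos ⟪x, ξ⟫) :
    ∃ c : ℝ, 0 < c ∧
      ∀ x : EuclideanSpace ℝ (Fin d), x ≠ 0 →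
        c⁻¹ * p 1 x ≤ min 1 (ν x) ∧ min 1 (ν x) ≤ c * p 1 x := by
  obtain ⟨C, hC, hup⟩ := upper_bound d hd α hα0 hα2
  obtain ⟨c0, hc0, hlo⟩ := lower_bound d hd α hα0 hα2
  have hGne : Real.Gamma (-α / 2) ≠ 0 := by
    apply Real.Gamma_ne_zero
    intro m hm
    rcases m with _ | m
    · simp at hm; linarith
    · push_cast at hm
      have : (0 : ℝ) ≤ m := by positivity
      linarith
  set B := (2 : ℝ) ^ α * Real.Gamma (((d : ℝ) + α) / 2) /
        (Real.pi ^ ((d : ℝ) / 2) * |Real.Gamma (-α / 2)|) with hB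
  have hB0 : 0 < B := by
    have : 0 < Real.Gamma (((d : ℝ) + α) / 2) := Real.Gamma_pos_of_pos (by positivity)
    have : 0 < |Real.Gamma (-α / 2)| := abs_pos.2 hGne
    positivity
  set T := (2 * Real.pi) ^ (-(d : ℝ)) with hT
  have hT0 : 0 < T := by positivity
  set Q := ∫ ξ : EuclideanSpace ℝ (Fin d), exp (-(‖ξ‖ ^ α)) with hQ
  have hQ0 : 0 ≤ Q := integral_nonneg fun _ => (exp_pos _).le
  have e1 : 0 ≤ T * Q := by positivity
  have e2 : 0 < T * C / B := by positivity
  have e3 : 0 < 1 / (T * c0) := by positivity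
  have e4 : 0 < B / (T * c0) := by positivity
  set c := T * Q + T * C / B + 1 / (T * c0) + B / (T * c0) with hc
  have hcpos : 0 < c := by positivity
  refine ⟨c, hcpos, fun x hx => ?_⟩
  set w := ‖x‖ ^ (-((d : ℝ) + α)) with hw
  have hxn : 0 < ‖x‖ := norm_pos_iff.2 hx
  have hw0 : 0 < w := by positivity
  have hpow : ∀ r : ℝ, 0 ≤ r → (r ^ 2) ^ (-((d : ℝ) / 2 + α / 2)) = r ^ (-((d : ℝ) + α)) := by
    intro r hr
    rw [← rpow_two, ← rpow_mul hr]
    congr 1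
    ring
  rw [hν x hx, hp 1 one_pos x]
  simp only [one_mul]
  set q := ∫ ξ : EuclideanSpace ℝ (Fin d), exp (-(‖ξ‖ ^ α)) * cos ⟪x, ξ⟫ with hq
  have hqQ : q ≤ Q := by
    have hi := integrable_stable d hd α hα0
    refine integral_mono (hi.mono' (by fun_prop) (Eventually.of_forall fun ξ => ?_)) hi fun ξ => ?_
    · rw [norm_mul, norm_of_nonneg (exp_pos _).le]
      exact mul_le_of_le_one_right (exp_pos _).le (abs_cos_le_one _)
    · exact mul_le_of_le_one_right (exp_pos _).le (cos_le_one _)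
  have hqC : q ≤ C * w := by
    have := hup x hx
    rwa [hpow _ hxn.le] at this
  have hql : c0 * min 1 w ≤ q := by
    rcases le_total ‖x‖ 1 with h | h
    · have := hlo x 1 le_rfl (by nlinarith)
      rw [one_rpow] at this
      refine le_trans ?_ this
      gcongr
      exact min_le_left _ _
    · have := hlo x (‖x‖ ^ 2) (by nlinarith) le_rfl
      rw [hpow _ hxn.le] at this
      refine le_trans ?_ this
      gcongr
      exact min_le_right _ _
  constructor
  · rw [inv_mul_le_iff₀ hcpos]
    rcases le_total 1 (B * w) with h | h
    · rw [min_eq_left h]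
      have : T * q ≤ T * Q := by gcongr
      linarith
    · rw [min_eq_right h]
      calc T * q ≤ T * (C * w) := by gcongr
        _ = T * C / B * (B * w) := by field_simp
        _ ≤ c * (B * w) := by
          gcongr
          linarith
  · rcases le_total 1 w with h | h
    · rw [min_eq_left h] at hql
      refine (min_le_left _ _).trans ?_
      calc 1 = 1 / (T * c0) * (T * (c0 * 1)) := by field_simp
        _ ≤ c * (T * q) := by
          gcongr
          linarith
    · rw [min_eq_right h] at hql
      refine (min_le_right _ _).trans ?_
      calc B * w = B / (T * c0) * (T * (c0 * w)) := by field_simp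
        _ ≤ c * (T * q) := by
          gcongr
          linarith
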